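/- arXiv:1503.03279 — 2 statements merged into one kernel-verified Lean document; each statement's English description precedes it below -/
import Mathlib

section
/- For every integer i, the identity ((m+1)n + im)·\overline{t^{n+i-1}u\,dt} = −∑_{j=0}^{n−1} ((m+1)j + mi)·a_j·\overline{t^{i+j-1}u\,dt} holds in Ω¹_{R_m}/dR_m. -/
open Polynomial LaurentPolynomial

noncomputable section

variable (n m : ℕ) (a : ℕ → ℂ)

/-- The polynomial `p(t) = aₙtⁿ + ... + a₁t + a₀`. -/
def pPoly : Polynomial ℂ := ∑ i ∈ Finset.range (n + 1), Polynomial.C (a i) * Polynomial.X ^ i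

/-- The ring `R_m = ℂ[t,t⁻¹][u]/(uᵐ - p(t))`. -/
abbrev Rm : Type :=
  AdjoinRoot ((Polynomial.X : Polynomial (LaurentPolynomial ℂ)) ^ m -
    Polynomial.C ((pPoly n a).toLaurent))

/-- The element `tⁱ` of `R_m`, for `i : ℤ`. -/
abbrev tpow (i : ℤ) : Rm n m a :=
  algebraMap (LaurentPolynomial ℂ) (Rm n m a) (LaurentPolynomial.T i)

/-- The element `u` of `R_m`. -/
abbrev uElt : Rm n m a := AdjoinRoot.root _

/-- The subspace `dR_m` of exact differentials inside the Kähler differentials `Ω¹_{R_m}`. -/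
abbrev dR : Submodule ℂ (Ω[Rm n m a⁄ℂ]) :=
  LinearMap.range (KaehlerDifferential.D ℂ (Rm n m a)).toLinearMap

/-- The quotient `Ω¹_{R_m}/dR_m`. -/
abbrev OmegaQ := Ω[Rm n m a⁄ℂ] ⧸ dR n m a

/-- The class `\overline{f dg}` in `Ω¹_{R_m}/dR_m`. -/
abbrev fdg (f g : Rm n m a) : OmegaQ n m a :=
  Submodule.Quotient.mk (f • KaehlerDifferential.D ℂ (Rm n m a) g)

/-!
The identity says that the exact differential `d(m tⁱ uᵐ⁺¹)` has class zero. With `f = uᵐ`, the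
Leibniz rule gives `m f du = u df`, so this differential is `(m + 1) tⁱ u df + m f u d(tⁱ)`. That
expression is additive in `f`, and a monomial `tᵉ` of `f` contributes
`((m + 1) e + m i) tⁱ⁺ᵉ⁻¹ u dt`.
-/

section Semiring

variable {K R M : Type*} [CommSemiring K] [CommSemiring R] [Algebra K R]
variable [AddCommMonoid M] [Module K M] [Module R M]

theorem nsmul_pow_smul_derivation (D : Derivation K R M) (m : ℕ) (u : R) :
    m • u ^ m • D u = u • D (u ^ m) := by
  cases m with
  | zero => simp
  | succ k =>
    rw [D.leibniz_pow, Nat.add_sub_cancel]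
    module

theorem nsmul_derivation_mul_pow_succ (D : Derivation K R M) (m : ℕ) (x u : R) :
    m • D (x * u ^ (m + 1)) = (m + 1) • (x * u) • D (u ^ m) + m • (u ^ m * u) • D x := by
  calc
    m • D (x * u ^ (m + 1)) = (m + 1) • x • m • u ^ m • D u + m • (u ^ m * u) • D x := by
      rw [D.leibniz, D.leibniz_pow, Nat.add_sub_cancel]
      module
    _ = (m + 1) • (x * u) • D (u ^ m) + m • (u ^ m * u) • D x := by
      rw [nsmul_pow_smul_derivation, smul_smul x u]

end Semiring

section Units

variable {ι K R M : Type*} [CommRing K] [CommRing R] [Algebra K R]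
variable [AddCommGroup M] [Module K M] [Module R M]

theorem derivation_units_zpow (D : Derivation K R M) (t : Rˣ) (i : ℤ) :
    D ↑(t ^ i) = i • (↑(t ^ (i - 1)) : R) • D ↑t := by
  have derivation_pow (k : ℕ) : D ↑(t ^ k) = k • (↑(t ^ ((k : ℤ) - 1)) : R) • D ↑t := by
    cases k with
    | zero => simp
    | succ k => simp [D.leibniz_pow]
  obtain ⟨k, rfl | rfl⟩ := i.eq_nat_or_neg
  · simpa only [zpow_natCast, natCast_zsmul] using derivation_pow k
  · have zpow_neg_mul_pow : (↑(t ^ (-(k : ℤ))) : R) * ↑(t ^ k) = 1 := by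
      rw [← Units.val_mul, zpow_neg, zpow_natCast, inv_mul_cancel, Units.val_one]
    have sq_mul_zpow :
        (↑(t ^ (-(k : ℤ))) : R) ^ 2 * ↑(t ^ ((k : ℤ) - 1)) = ↑(t ^ (-(k : ℤ) - 1)) := by
      rw [← Units.val_pow_eq_pow_val, ← Units.val_mul, ← zpow_natCast, ← zpow_mul, ← zpow_add]
      congr 2
      push_cast
      ring
    rw [D.leibniz_of_mul_eq_one zpow_neg_mul_pow, derivation_pow, ← sq_mul_zpow]
    module

theorem nsmul_derivation_zpow_add_nsmul_derivation_zpow (D : Derivation K R M) (t : Rˣ) (u : R)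
    (m : ℕ) (i e : ℤ) :
    (m + 1) • ((↑(t ^ i) : R) * u) • D ↑(t ^ e) + m • ((↑(t ^ e) : R) * u) • D ↑(t ^ i) =
      (((m : ℤ) + 1) * e + m * i) • ((↑(t ^ (i + e - 1)) : R) * u) • D ↑t := by
  have zpow_mul_zpow_sub_one : (↑(t ^ i) * ↑(t ^ (e - 1)) : R) = ↑(t ^ (i + e - 1)) := by
    rw [← Units.val_mul, ← zpow_add, add_sub_assoc]
  have zpow_sub_one_mul_zpow : (↑(t ^ (i - 1)) * ↑(t ^ e) : R) = ↑(t ^ (i + e - 1)) := by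
    rw [← Units.val_mul, ← zpow_add, sub_add_eq_add_sub]
  rw [derivation_units_zpow D t e, derivation_units_zpow D t i]
  calc
    _ = (((m : ℤ) + 1) * e) • (↑(t ^ i) * ↑(t ^ (e - 1)) * u) • D ↑t +
        ((m : ℤ) * i) • (↑(t ^ (i - 1)) * ↑(t ^ e) * u) • D ↑t := by module
    _ = _ := by rw [zpow_mul_zpow_sub_one, zpow_sub_one_mul_zpow, ← add_smul]

theorem nsmul_derivation_zpow_mul_pow_succ [IsScalarTower K R M] (D : Derivation K R M) (t : Rˣ)
    {u : R} {m : ℕ} {s : Finset ι} {a : ι → K} {e : ι → ℤ}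
    (hu : u ^ m = ∑ k ∈ s, a k • (↑(t ^ e k) : R)) (i : ℤ) :
    m • D (↑(t ^ i) * u ^ (m + 1)) =
      ∑ k ∈ s, ((((m : ℤ) + 1) * e k + m * i : ℤ) * a k) •
        ((↑(t ^ (i + e k - 1)) : R) * u) • D ↑t := by
  rw [nsmul_derivation_mul_pow_succ, hu]
  simp only [map_sum, D.map_smul, Finset.sum_mul, Finset.sum_smul, Finset.smul_sum]
  rw [← Finset.sum_add_distrib]
  refine Finset.sum_congr rfl fun k _ => ?_
  rw [mul_comm _ (a k), mul_smul (a k), Int.cast_smul_eq_zsmul,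
    ← nsmul_derivation_zpow_add_nsmul_derivation_zpow, smul_mul_assoc, smul_assoc]
  module

theorem statement1_general [IsScalarTower K R M] (D : Derivation K R M) (t : Rˣ) (u : R) (n m : ℕ)
    (a : ℕ → K) (hu : u ^ m = ∑ j ∈ Finset.range (n + 1), a j • (t : R) ^ j) (i : ℤ) :
    (((((m : ℤ) + 1) * n + i * m : ℤ) : K) * a n) •
        (Submodule.Quotient.mk (((↑(t ^ ((n : ℤ) + i - 1)) : R) * u) • D ↑t) :
          M ⧸ LinearMap.range D.toLinearMap) =
      -∑ j ∈ Finset.range n, (((((m : ℤ) + 1) * j + m * i : ℤ) : K) * a j) •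
        Submodule.Quotient.mk (((↑(t ^ (i + (j : ℤ) - 1)) : R) * u) • D ↑t) := by
  have derivation_primitive := nsmul_derivation_zpow_mul_pow_succ D t (e := fun j : ℕ => (j : ℤ))
    (by simpa only [zpow_natCast, Units.val_pow_eq_pow_val] using hu) i
  have mk_sum_eq_zero := (Submodule.Quotient.mk_eq_zero (LinearMap.range D.toLinearMap)).2
    ⟨m • ((↑(t ^ i) : R) * u ^ (m + 1)), (map_nsmul D m _).trans derivation_primitive⟩
  rw [eq_neg_iff_add_eq_zero, add_comm, add_comm (n : ℤ) i, mul_comm i (m : ℤ),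
    ← Finset.sum_range_succ]
  simpa only [← Submodule.mkQ_apply, map_sum, map_smul] using mk_sum_eq_zero

end Units

theorem val_unitOfInvertible_T_zpow {K : Type*} [Semiring K] (i : ℤ) :
    (↑(unitOfInvertible (T 1 : K[T;T⁻¹]) ^ i) : K[T;T⁻¹]) = T i := by
  obtain ⟨k, rfl | rfl⟩ := i.eq_nat_or_neg
  · rw [zpow_natCast, Units.val_pow_eq_pow_val, val_unitOfInvertible, T_pow, mul_one]
  · rw [zpow_neg, ← inv_zpow, zpow_natCast, Units.val_pow_eq_pow_val, val_inv_unitOfInvertible,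
      invOf_T, T_pow, mul_neg_one]

-- Mathlib's `root_X_pow_sub_C_pow` is restricted to a field of coefficients.
theorem adjoinRoot_root_X_pow_sub_C_pow {S : Type*} [CommRing S] (m : ℕ) (f : S) :
    AdjoinRoot.root (X ^ m - Polynomial.C f) ^ m = algebraMap S _ f := by
  have eval₂_eq_zero := AdjoinRoot.eval₂_root (X ^ m - Polynomial.C f)
  rwa [eval₂_sub, eval₂_pow, eval₂_X, Polynomial.eval₂_C, sub_eq_zero] at eval₂_eq_zero

theorem toLaurent_pPoly :
    (pPoly n a).toLaurent = ∑ j ∈ Finset.range (n + 1), a j • (T j : ℂ[T;T⁻¹]) := by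
  simp only [pPoly, map_sum, toLaurent_C_mul_X_pow, ← LaurentPolynomial.smul_eq_C_mul]

/-- The element `t` of `R_m` as a unit; its integer powers are the elements `tpow`. -/
def tUnit : (Rm n m a)ˣ :=
  Units.map (algebraMap ℂ[T;T⁻¹] (Rm n m a)).toMonoidHom (unitOfInvertible (T 1))

theorem val_tUnit : (tUnit n m a : Rm n m a) = tpow n m a 1 := rfl

theorem val_tUnit_zpow (i : ℤ) : (↑(tUnit n m a ^ i) : Rm n m a) = tpow n m a i := by
  rw [tUnit, ← map_zpow]
  exact congrArg (algebraMap ℂ[T;T⁻¹] (Rm n m a)) (val_unitOfInvertible_T_zpow i)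

theorem uElt_pow :
    uElt n m a ^ m = ∑ j ∈ Finset.range (n + 1), a j • (tUnit n m a : Rm n m a) ^ j := by
  calc
    uElt n m a ^ m = algebraMap _ (Rm n m a) (pPoly n a).toLaurent :=
      adjoinRoot_root_X_pow_sub_C_pow m _
    _ = algebraMap _ (Rm n m a) (∑ j ∈ Finset.range (n + 1), a j • T j) :=
      congrArg _ (toLaurent_pPoly n a)
    _ = ∑ j ∈ Finset.range (n + 1), a j • (tUnit n m a : Rm n m a) ^ j := by
      rw [map_sum]
      refine Finset.sum_congr rfl fun j _ => ?_
      rw [Algebra.smul_def, map_mul, ← IsScalarTower.algebraMap_apply, ← Algebra.smul_def,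
        val_tUnit, tpow, ← map_pow, T_pow, mul_one]

/-- For every integer `i`,
`((m+1)n + im)·\overline{t^{n+i-1}u dt} = −∑_{j=0}^{n−1} ((m+1)j + mi)·a_j·\overline{t^{i+j-1}u dt}`
holds in `Ω¹_{R_m}/dR_m`. -/
theorem statement1 (hn : 1 ≤ n) (hm : 2 ≤ m) (han : a n = 1) (i : ℤ) :
    ((((m : ℤ) + 1) * n + i * m : ℤ) : ℂ) •
        fdg n m a (tpow n m a ((n : ℤ) + i - 1) * uElt n m a) (tpow n m a 1) =
      -∑ j ∈ Finset.range n,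
        (((((m : ℤ) + 1) * j + m * i : ℤ) : ℂ) * a j) •
          fdg n m a (tpow n m a (i + (j : ℤ) - 1) * uElt n m a) (tpow n m a 1) := by
  simpa only [han, mul_one, val_tUnit_zpow, val_tUnit] using
    statement1_general (KaehlerDifferential.D ℂ (Rm n m a)) (tUnit n m a) (uElt n m a) n m a
      (uElt_pow n m a) i
end
end

section
/- For every natural number m, the polynomial P_m(c) satisfies the fourth-order linear differential equation 16(c²−1)²·P_m'''' + 160c(c²−1)·P_m''' − 8(c²(m²−4m−46) − m² + 4m + 22)·P_m'' − 24c(m²−4m−6)·P_m' + (m−4)²m²·P_m = 0, where primes denote differentiation with respect to c. -/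
open Polynomial

noncomputable section

/-!
On even indices, `y n = P (2 * n)` solves an associated Gegenbauer recurrence with parameter
`α = 3 / 2`. Suitably rescaled Gegenbauer functions also satisfy a first-order
differential-difference relation; for `y` it fails by a defect `u`. Solutions of the recurrence
are determined by their first two terms, and both `u` and its own defect solve it again, so the
defect of `u` is a combination of `u` and `y`, and `y` and `u` together form a closed first-order
system. Eliminating the neighbouring index leaves, with `ν = n - 1`,

`U_ν (y n) = 2 (u n)'` and `T_ν (u n) = 2 α (α - 1) (y n)'`,

where `T_ν` and `U_ν` are the Chebyshev operators. Since `(T_ν f)' = U_ν f'`, this gives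
`U_ν (U_ν (y n)) = 4 α (α - 1) (y n)''`, which is the fourth-order equation. On odd indices `P`
vanishes.
-/

section Chebyshev

variable {R : Type*} [CommRing R]

/-- The differential operator annihilating the Chebyshev polynomial of the first kind of
degree `ν`; the degree is allowed to be any scalar. -/
def chebyshevTOp (ν : R) (f : R[X]) : R[X] :=
  (X ^ 2 - 1) * derivative^[2] f + X * derivative f - C (ν ^ 2) * f

/-- The differential operator annihilating the Chebyshev polynomial of the second kind of
degree `ν - 1`, which is proportional to the derivative of the one of the first kind of
degree `ν`. -/
def chebyshevUOp (ν : R) (f : R[X]) : R[X] :=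
  (X ^ 2 - 1) * derivative^[2] f + 3 * X * derivative f - C (ν ^ 2 - 1) * f

theorem X_sq_sub_one_ne_zero [Nontrivial R] : (X ^ 2 - 1 : R[X]) ≠ 0 := by
  simpa using (monic_X_pow_sub_C (1 : R) two_ne_zero).ne_zero

theorem derivative_chebyshevTOp (ν : R) (f : R[X]) :
    derivative (chebyshevTOp ν f) = chebyshevUOp ν (derivative f) := by
  simp only [chebyshevTOp, chebyshevUOp, Function.iterate_succ, Function.iterate_zero,
    Function.comp_apply, id_eq, derivative_add, derivative_sub, derivative_mul, derivative_C,
    derivative_X_sq, derivative_one, derivative_X, C_sub, C_1, map_ofNat]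
  ring

theorem chebyshevUOp_C_mul (ν a : R) (f : R[X]) :
    chebyshevUOp ν (C a * f) = C a * chebyshevUOp ν f := by
  simp only [chebyshevUOp, iterate_derivative_C_mul, derivative_C_mul]
  ring

theorem chebyshevUOp_chebyshevUOp (ν : R) (f : R[X]) :
    chebyshevUOp ν (chebyshevUOp ν f) =
      (X ^ 2 - 1) ^ 2 * derivative^[4] f + 10 * X * (X ^ 2 - 1) * derivative^[3] f +
        (C (25 - 2 * ν ^ 2) * X ^ 2 + C (2 * ν ^ 2 - 10)) * derivative^[2] f +
        C (15 - 6 * ν ^ 2) * X * derivative f + C ((ν ^ 2 - 1) ^ 2) * f := by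
  simp only [chebyshevUOp, Function.iterate_succ, Function.iterate_zero, Function.comp_apply,
    id_eq, derivative_add, derivative_sub, derivative_mul, derivative_C, derivative_X_sq,
    derivative_one, derivative_X, derivative_ofNat, derivative_zero]
  simp only [C_sub, C_mul, C_pow, C_1, map_ofNat]
  ring

end Chebyshev

section Gegenbauer

variable {R : Type*} [CommRing R] {α : R} {y : ℕ → R[X]}

/-- The sequences of polynomials solving the associated Gegenbauer recurrence. With `y n` placed in
degree `n + α - 2`, with `k = n + α - 1` and with `l = 1 - α`, it is the recurrence
`(k + 1) c (k + 1) = 2 (k + l) X c k - (k + 2 l - 1) c (k - 1)` of the Gegenbauer polynomials of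
parameter `l`. -/
def gegenbauerSolutions (α : R) : Submodule R[X] (ℕ → R[X]) where
  carrier := {y | ∀ n : ℕ,
    ((n : R[X]) + C α) * y (n + 2) = 2 * (n : R[X]) * X * y (n + 1) - ((n : R[X]) - C α) * y n}
  zero_mem' n := by simp
  add_mem' hy hz n := by
    simp only [Pi.add_apply]
    linear_combination hy n + hz n
  smul_mem' p y hy n := by
    simp only [Pi.smul_apply, smul_eq_mul]
    linear_combination p * hy n

theorem derivative_gegenbauer_recurrence (hy : y ∈ gegenbauerSolutions α) (n : ℕ) :
    ((n : R[X]) + C α) * derivative (y (n + 2)) =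
      2 * (n : R[X]) * y (n + 1) + 2 * (n : R[X]) * X * derivative (y (n + 1)) -
        ((n : R[X]) - C α) * derivative (y n) := by
  have h := congrArg derivative (hy n)
  simp only [derivative_mul, derivative_add, derivative_sub, derivative_natCast, derivative_C,
    derivative_X, derivative_ofNat] at h
  linear_combination h

/-- The failure of `y` to satisfy the first-order differential-difference relation that holds
for Gegenbauer functions multiplied by `(X ^ 2 - 1) ^ (-α / 2)`. This factor cancels in the
recurrence, and with it the defect of the solution starting with `1, 0` starts with `0, -α`. -/
def ladderDefect (α : R) (y : ℕ → R[X]) (n : ℕ) : R[X] :=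
  (X ^ 2 - 1) * derivative (y n) + (n : R[X]) * X * y n - ((n : R[X]) + C α - 1) * y (n + 1)

theorem ladderDefect_mem_gegenbauerSolutions (hy : y ∈ gegenbauerSolutions α) :
    ladderDefect α y ∈ gegenbauerSolutions α := by
  intro n
  have hy' := hy (n + 1)
  simp only [ladderDefect]
  push_cast at hy' ⊢
  linear_combination (X ^ 2 - 1) * derivative_gegenbauer_recurrence hy n +
    (n : R[X]) * X * hy n - ((n : R[X]) + C α) * hy'

theorem X_sq_sub_one_mul_derivative (α : R) (y : ℕ → R[X]) (n : ℕ) :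
    (X ^ 2 - 1) * derivative (y n) =
      ladderDefect α y n - (n : R[X]) * X * y n + ((n : R[X]) + C α - 1) * y (n + 1) := by
  rw [ladderDefect]
  ring

theorem X_sq_sub_one_mul_derivative_succ (hy : y ∈ gegenbauerSolutions α) (n : ℕ) :
    (X ^ 2 - 1) * derivative (y (n + 1)) =
      ladderDefect α y (n + 1) + ((n : R[X]) - 1) * X * y (n + 1) - ((n : R[X]) - C α) * y n := by
  rw [ladderDefect]
  push_cast
  linear_combination hy n

theorem derivative_ladderDefect (α : R) (y : ℕ → R[X]) (n : ℕ) :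
    derivative (ladderDefect α y n) =
      (X ^ 2 - 1) * derivative^[2] (y n) + ((n : R[X]) + 2) * X * derivative (y n) +
        (n : R[X]) * y n - ((n : R[X]) + C α - 1) * derivative (y (n + 1)) := by
  simp only [ladderDefect, Function.iterate_succ, Function.iterate_zero, Function.comp_apply,
    id_eq, derivative_add, derivative_sub, derivative_mul, derivative_X_sq, derivative_one,
    derivative_X, derivative_natCast, derivative_C]
  simp only [map_ofNat]
  ring

theorem natCast_add_C_ne_zero (hα : ∀ n : ℕ, (n : R) + α ≠ 0) (n : ℕ) :
    (n : R[X]) + C α ≠ 0 := by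
  rw [← map_natCast C, ← C_add]
  exact C_ne_zero.mpr (hα n)

variable [IsDomain R]

theorem gegenbauerSolutions_ext (hα : ∀ n : ℕ, (n : R) + α ≠ 0) {z : ℕ → R[X]}
    (hy : y ∈ gegenbauerSolutions α) (hz : z ∈ gegenbauerSolutions α)
    (h0 : y 0 = z 0) (h1 : y 1 = z 1) : y = z := by
  funext n
  induction n using Nat.twoStepInduction with
  | zero => exact h0
  | one => exact h1
  | more n ih0 ih1 =>
    apply mul_left_cancel₀ (natCast_add_C_ne_zero hα n)
    rw [hy n, hz n, ih0, ih1]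

theorem ladderDefect_ladderDefect (hα : ∀ n : ℕ, (n : R) + α ≠ 0)
    (hy : y ∈ gegenbauerSolutions α) (h0 : y 0 = 1) (h1 : y 1 = 0) :
    ladderDefect α (ladderDefect α y) =
      (X : R[X]) • ladderDefect α y + C (α * (α - 1)) • y := by
  have h2 : y 2 = 1 := by
    apply mul_left_cancel₀ (natCast_add_C_ne_zero hα 0)
    simpa [h0] using hy 0
  have h3 : (1 + C α) * y 3 = 2 * X := by simpa [h1, h2] using hy 1
  have hu0 : ladderDefect α y 0 = 0 := by simp [ladderDefect, h0, h1]
  have hu1 : ladderDefect α y 1 = -C α := by simp [ladderDefect, h1, h2]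
  have hu2 : ladderDefect α y 2 = 0 := by
    simp only [ladderDefect, h2, derivative_one]
    push_cast
    linear_combination -h3
  have hu := ladderDefect_mem_gegenbauerSolutions hy
  apply gegenbauerSolutions_ext hα (ladderDefect_mem_gegenbauerSolutions hu)
    (add_mem (Submodule.smul_mem _ _ hu) (Submodule.smul_mem _ _ hy))
  · rw [ladderDefect]
    simp only [hu0, hu1, h0, Pi.add_apply, Pi.smul_apply, smul_eq_mul, derivative_zero, C_mul,
      C_sub, C_1]
    push_cast
    ring
  · rw [ladderDefect]
    simp [hu1, hu2, h1]

theorem chebyshevUOp_eq_derivative_ladderDefect (hα : ∀ n : ℕ, (n : R) + α ≠ 0)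
    (hy : y ∈ gegenbauerSolutions α) (h0 : y 0 = 1) (h1 : y 1 = 0) (n : ℕ) :
    chebyshevUOp ((n : R) - 1) (y n) = 2 * derivative (ladderDefect α y n) := by
  apply mul_left_cancel₀ X_sq_sub_one_ne_zero
  have hu := ladderDefect_ladderDefect hα hy h0 h1
  have hyn := X_sq_sub_one_mul_derivative α y n
  have hyn' := derivative_ladderDefect α y n
  have hyn_succ := X_sq_sub_one_mul_derivative_succ hy n
  have hun := X_sq_sub_one_mul_derivative α (ladderDefect α y) n
  simp only [hu, Pi.add_apply, Pi.smul_apply, smul_eq_mul, C_mul, C_sub, C_1] at hun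
  simp only [chebyshevUOp, C_sub, C_pow, map_natCast, C_1]
  -- `hyn_succ` brings in `y (n + 1)` and its defect, which `hyn` and `hun` eliminate.
  linear_combination -(X ^ 2 - 1) * hyn' + ((n : R[X]) + C α - 1) * hyn_succ - hun -
    ((n : R[X]) - 1) * X * hyn

theorem chebyshevTOp_ladderDefect (hα : ∀ n : ℕ, (n : R) + α ≠ 0)
    (hy : y ∈ gegenbauerSolutions α) (h0 : y 0 = 1) (h1 : y 1 = 0) (n : ℕ) :
    chebyshevTOp ((n : R) - 1) (ladderDefect α y n) =
      C (2 * α * (α - 1)) * derivative (y n) := by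
  apply mul_left_cancel₀ X_sq_sub_one_ne_zero
  have hu := ladderDefect_ladderDefect hα hy h0 h1
  have hyn := X_sq_sub_one_mul_derivative α y n
  have hun := X_sq_sub_one_mul_derivative α (ladderDefect α y) n
  have hun' := derivative_ladderDefect α (ladderDefect α y) n
  have hun_succ :=
    X_sq_sub_one_mul_derivative_succ (ladderDefect_mem_gegenbauerSolutions hy) n
  simp only [hu, Pi.add_apply, Pi.smul_apply, smul_eq_mul, derivative_add, derivative_mul,
    derivative_X, derivative_C] at hun hun' hun_succ
  simp only [chebyshevTOp, C_sub, C_mul, C_pow, map_natCast, map_ofNat, C_1] at hun hun' hun_succ ⊢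
  linear_combination -(X ^ 2 - 1) * hun' + ((n : R[X]) + C α - 1) * hun_succ - n * X * hun -
    C α * (C α - 1) * hyn

theorem chebyshevUOp_chebyshevUOp_of_mem_gegenbauerSolutions (hα : ∀ n : ℕ, (n : R) + α ≠ 0)
    (hy : y ∈ gegenbauerSolutions α) (h0 : y 0 = 1) (h1 : y 1 = 0) (n : ℕ) :
    chebyshevUOp ((n : R) - 1) (chebyshevUOp ((n : R) - 1) (y n)) =
      C (4 * α * (α - 1)) * derivative^[2] (y n) := by
  set ν : R := n - 1
  set u := ladderDefect α y n
  calc chebyshevUOp ν (chebyshevUOp ν (y n))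
    _ = C 2 * chebyshevUOp ν (derivative u) := by
      rw [chebyshevUOp_eq_derivative_ladderDefect hα hy h0 h1, ← map_ofNat C 2,
        chebyshevUOp_C_mul]
    _ = C 2 * derivative (chebyshevTOp ν u) := by rw [derivative_chebyshevTOp]
    _ = C 2 * derivative (C (2 * α * (α - 1)) * derivative (y n)) := by
      rw [chebyshevTOp_ladderDefect hα hy h0 h1]
    _ = C (4 * α * (α - 1)) * derivative^[2] (y n) := by
      rw [derivative_C_mul, ← mul_assoc, ← C_mul]
      congr 2
      ring

end Gegenbauer

section Subsequences

variable {R : Type*} [CommRing R] {α : R} {P : ℕ → R[X]}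

theorem even_subsequence_mem_gegenbauerSolutions [IsDomain R] (h2 : (2 : R) ≠ 0)
    (hP : ∀ k : ℕ, C (k + 2 * α) * P (k + 4) =
      C (2 * (k : R)) * X * P (k + 2) - C (k - 2 * α) * P k) :
    (fun n ↦ P (2 * n)) ∈ gegenbauerSolutions α := by
  intro n
  apply mul_left_cancel₀ (C_ne_zero.mpr h2)
  have h := hP (2 * n)
  simp only [Nat.cast_mul, Nat.cast_ofNat, C_add, C_sub, C_mul, map_natCast, map_ofNat] at h ⊢
  linear_combination h

theorem odd_subsequence_eq_zero [IsDomain R] (hα : ∀ k : ℕ, (k : R) + 2 * α ≠ 0)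
    (hP : ∀ k : ℕ, C (k + 2 * α) * P (k + 4) =
      C (2 * (k : R)) * X * P (k + 2) - C (k - 2 * α) * P k)
    (h1 : P 1 = 0) (h3 : P 3 = 0) (n : ℕ) : P (2 * n + 1) = 0 := by
  induction n using Nat.twoStepInduction with
  | zero => exact h1
  | one => exact h3
  | more n ih0 ih1 =>
    apply mul_left_cancel₀ (C_ne_zero.mpr (hα (2 * n + 1)))
    have h := hP (2 * n + 1)
    rwa [ih0, show 2 * n + 1 + 2 = 2 * (n + 1) + 1 by ring, ih1, mul_zero, mul_zero, sub_zero,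
      ← mul_zero (C _)] at h

end Subsequences

theorem statement13_general {R : Type*} [CommRing R] [IsDomain R] {α : R}
    (hα : ∀ k : ℕ, (k : R) + 2 * α ≠ 0) (P : ℕ → R[X])
    (hP0 : P 0 = 1) (hP1 : P 1 = 0) (hP2 : P 2 = 0) (hP3 : P 3 = 0)
    (hP : ∀ k : ℕ, C (k + 2 * α) * P (k + 4) =
      C (2 * (k : R)) * X * P (k + 2) - C (k - 2 * α) * P k) (m : ℕ) :
    C 16 * (X ^ 2 - 1) ^ 2 * derivative^[4] (P m) +
        C 160 * X * (X ^ 2 - 1) * derivative^[3] (P m) -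
        C 8 * (C ((m : R) ^ 2 - 4 * m - 46) * X ^ 2 +
          C (-(m : R) ^ 2 + 4 * m + (16 + 8 * α * (α - 1)))) * derivative^[2] (P m) -
        C (24 * ((m : R) ^ 2 - 4 * m - 6)) * X * derivative (P m) +
        C (((m : R) - 4) ^ 2 * (m : R) ^ 2) * P m = 0 := by
  rcases m.even_or_odd' with ⟨n, rfl | rfl⟩
  · have h2 : (2 : R) ≠ 0 := left_ne_zero_of_mul (by simpa using hα 0)
    have hα' (n : ℕ) : (n : R) + α ≠ 0 := fun h ↦
      hα (2 * n) (by push_cast; linear_combination 2 * h)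
    have h := chebyshevUOp_chebyshevUOp_of_mem_gegenbauerSolutions hα'
      (even_subsequence_mem_gegenbauerSolutions h2 hP) hP0 hP2 n
    rw [chebyshevUOp_chebyshevUOp] at h
    simp only [Nat.cast_mul, Nat.cast_ofNat, C_add, C_sub, C_neg, C_mul, C_pow, C_1,
      map_natCast, map_ofNat] at h ⊢
    linear_combination 16 * h
  · simp [odd_subsequence_eq_zero hα hP hP1 hP3]

/-- Let `P_m(c) ∈ ℚ[c]` be the polynomials determined by `P₀ = 1`, `P₁ = P₂ = P₃ = 0` and
the recursion `(6+2k)·P_{k+4}(c) = 4kc·P_{k+2}(c) − 2(k−3)·P_k(c)` for `k ≥ 0`.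
Then for every natural number `m`, `P_m` satisfies the fourth-order linear ODE
`16(c²−1)²·P_m⁗ + 160c(c²−1)·P_m''' − 8(c²(m²−4m−46) − m² + 4m + 22)·P_m''
  − 24c(m²−4m−6)·P_m' + (m−4)²m²·P_m = 0`. -/
theorem statement13 (P : ℕ → Polynomial ℚ)
    (hP0 : P 0 = 1) (hP1 : P 1 = 0) (hP2 : P 2 = 0) (hP3 : P 3 = 0)
    (hPrec : ∀ k : ℕ,
      Polynomial.C ((6 : ℚ) + 2 * k) * P (k + 4) =
        Polynomial.C ((4 : ℚ) * k) * Polynomial.X * P (k + 2) -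
          Polynomial.C (2 * ((k : ℚ) - 3)) * P k)
    (m : ℕ) :
    Polynomial.C (16 : ℚ) * (Polynomial.X ^ 2 - 1) ^ 2 * (derivative^[4] (P m)) +
        Polynomial.C (160 : ℚ) * Polynomial.X * (Polynomial.X ^ 2 - 1) *
          (derivative^[3] (P m)) -
        Polynomial.C (8 : ℚ) *
          (Polynomial.C ((m : ℚ) ^ 2 - 4 * m - 46) * Polynomial.X ^ 2 +
            Polynomial.C (-(m : ℚ) ^ 2 + 4 * m + 22)) * (derivative^[2] (P m)) -
        Polynomial.C (24 * ((m : ℚ) ^ 2 - 4 * m - 6)) * Polynomial.X * (derivative (P m)) +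
        Polynomial.C (((m : ℚ) - 4) ^ 2 * (m : ℚ) ^ 2) * P m = 0 := by
  have hP (k : ℕ) : C ((k : ℚ) + 2 * (3 / 2)) * P (k + 4) =
      C (2 * (k : ℚ)) * X * P (k + 2) - C ((k : ℚ) - 2 * (3 / 2)) * P k := by
    apply mul_left_cancel₀ (C_ne_zero.mpr (two_ne_zero (α := ℚ)))
    convert hPrec k using 1 <;>
      (simp only [mul_sub, ← mul_assoc, ← C_mul]; ring_nf)
  convert statement13_general (α := 3 / 2) (fun k ↦ by positivity) P hP0 hP1 hP2 hP3 hP m using 7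
  norm_num
end
end
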